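/- Let N ≥ 2, let Ω ⊆ ℝ^N be a domain with 0 ∈ Ω, and let u be a nonnegative Lipschitz function with compact support contained in Ω which is H⁰-radially decreasing, i.e. u(x) = U(H⁰(x)) for a nonincreasing function U : [0, ∞) → [0, ∞). Then equality holds in the case p = 1 of the anisotropic Hardy inequality: (N−1) · ∫_Ω u(x) / H⁰(x) dx = ∫_Ω |(x/H⁰(x)) · ∇u(x)| dx. In particular, the infimum H_1(Ω) = N−1 of the quotient ∫_Ω |(x/H⁰(x)) · ∇u|dx / ∫_Ω |u|/H⁰(x) dx is attained by every such nonzero u. -/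

import Mathlib

/-!
Write `g = polarNorm H`. Where `u` is differentiable, `∇u(x) · x` is the derivative at `t = 1` of
`t ↦ u (t x) = U (t g(x))`, hence nonpositive because `U` is nonincreasing. So the right-hand side
is `-∫ (∇u · x) / g`, and the theorem reduces to the identity
`∫ (∇u · x) / g = -(N - 1) ∫ u / g` (`integral_fderiv_div_eq`).

That identity uses only that `u` is Lipschitz with compact support and that `g` is continuous,
positively one-homogeneous and bounded below by a multiple of the Euclidean norm.
The change of variables `y = t x` gives
`∫ u (t x) / g(x) dx = t ^ (1 - N) ∫ u / g` for `t > 0`; differentiate both sides at `t = 1`.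
Differentiation under the integral is legitimate since `u` is differentiable a.e. (Rademacher) and
`t ↦ u (t x) / g(x)` is Lipschitz with a constant that is bounded in `x` and vanishes for large `x`.
Integrability of `u / g` near the origin is that of `1 / |x|`, which needs `N ≥ 2`.
-/

open MeasureTheory Set Filter
open scoped RealInnerProductSpace Topology ENNReal NNReal

noncomputable section

/-- `ℝ^N` as a Euclidean space. -/
abbrev Euc (N : ℕ) := EuclideanSpace ℝ (Fin N)

/-- `H : ℝ^N → ℝ` is a Finsler norm: nonnegative, convex, `C²` away from the origin,
even and positively one-homogeneous, comparable to the Euclidean norm, and with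
positive definite Hessian of `H²` away from the origin. -/
structure IsFinslerNorm {N : ℕ} (H : Euc N → ℝ) : Prop where
  nonneg : ∀ ξ, 0 ≤ H ξ
  convexOn : ConvexOn ℝ Set.univ H
  smooth : ContDiffOn ℝ 2 H {(0 : Euc N)}ᶜ
  homog : ∀ (t : ℝ) (ξ : Euc N), H (t • ξ) = |t| * H ξ
  bounds : ∃ a b : ℝ, 0 < a ∧ a ≤ b ∧ ∀ ξ : Euc N, a * ‖ξ‖ ≤ H ξ ∧ H ξ ≤ b * ‖ξ‖
  hessPosDef : ∀ ξ : Euc N, ξ ≠ 0 → ∀ v : Euc N, v ≠ 0 →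
    0 < iteratedFDeriv ℝ 2 (fun x => (H x) ^ 2) ξ ![v, v]

/-- The polar function `H⁰(x) = sup_{ξ ≠ 0} (ξ·x)/H(ξ)` of a Finsler norm. -/
def polarNorm {N : ℕ} (H : Euc N → ℝ) (x : Euc N) : ℝ :=
  sSup {r : ℝ | ∃ ξ : Euc N, ξ ≠ 0 ∧ r = ⟪ξ, x⟫ / H ξ}

/-- `u ∈ C_c^∞(Ω)`: a smooth function with compact support contained in `Ω`. -/
def IsTestFun {N : ℕ} (Ω : Set (Euc N)) (u : Euc N → ℝ) : Prop :=
  ContDiff ℝ (⊤ : ℕ∞) u ∧ HasCompactSupport u ∧ tsupport u ⊆ Ω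


/-! ### The polar function -/

section Polar

variable {N : ℕ} {H : Euc N → ℝ}

lemma inner_div_le_of_le {a : ℝ} (ha : 0 < a) (hb : ∀ ξ : Euc N, a * ‖ξ‖ ≤ H ξ)
    {ξ : Euc N} (hξ : ξ ≠ 0) (x : Euc N) : ⟪ξ, x⟫ / H ξ ≤ a⁻¹ * ‖x‖ := by
  have hn : 0 < ‖ξ‖ := norm_pos_iff.2 hξ
  have hH : 0 < H ξ := (mul_pos ha hn).trans_le (hb ξ)
  rw [div_le_iff₀ hH]
  calc ⟪ξ, x⟫ ≤ ‖ξ‖ * ‖x‖ := real_inner_le_norm _ _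
    _ = a⁻¹ * ‖x‖ * (a * ‖ξ‖) := by field_simp
    _ ≤ a⁻¹ * ‖x‖ * H ξ := by gcongr; exact hb ξ

lemma inner_div_le_polarNorm (hH : IsFinslerNorm H) {ξ : Euc N} (hξ : ξ ≠ 0) (x : Euc N) :
    ⟪ξ, x⟫ / H ξ ≤ polarNorm H x := by
  obtain ⟨a, b, ha, -, hab⟩ := hH.bounds
  refine le_csSup ⟨a⁻¹ * ‖x‖, ?_⟩ ⟨ξ, hξ, rfl⟩
  rintro r ⟨η, hη, rfl⟩
  exact inner_div_le_of_le ha (fun ξ => (hab ξ).1) hη x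

lemma polarNorm_le (hN : 2 ≤ N) {x : Euc N} {c : ℝ}
    (h : ∀ ξ : Euc N, ξ ≠ 0 → ⟪ξ, x⟫ / H ξ ≤ c) : polarNorm H x ≤ c := by
  have : Nonempty (Fin N) := ⟨⟨0, by omega⟩⟩
  obtain ⟨ξ, hξ⟩ := exists_ne (0 : Euc N)
  refine csSup_le ⟨_, ξ, hξ, rfl⟩ ?_
  rintro r ⟨η, hη, rfl⟩
  exact h η hη

lemma continuous_polarNorm (hN : 2 ≤ N) (hH : IsFinslerNorm H) : Continuous (polarNorm H) := by
  obtain ⟨a, b, ha, -, hab⟩ := hH.bounds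
  refine (LipschitzWith.of_le_add_mul' a⁻¹ fun x y => polarNorm_le hN fun ξ hξ => ?_).continuous
  have h1 := inner_div_le_polarNorm hH hξ y
  have h2 := inner_div_le_of_le ha (fun ξ => (hab ξ).1) hξ (x - y)
  rw [inner_sub_right, sub_div] at h2
  rw [dist_eq_norm]
  linarith

lemma polarNorm_smul_le (hN : 2 ≤ N) (hH : IsFinslerNorm H) {t : ℝ} (ht : 0 < t) (x : Euc N) :
    polarNorm H (t • x) ≤ t * polarNorm H x := by
  refine polarNorm_le hN fun ξ hξ => ?_
  rw [inner_smul_right, mul_div_assoc]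
  exact mul_le_mul_of_nonneg_left (inner_div_le_polarNorm hH hξ x) ht.le

lemma polarNorm_smul (hN : 2 ≤ N) (hH : IsFinslerNorm H) {t : ℝ} (ht : 0 < t) (x : Euc N) :
    polarNorm H (t • x) = t * polarNorm H x := by
  refine le_antisymm (polarNorm_smul_le hN hH ht x) ?_
  have h := polarNorm_smul_le hN hH (inv_pos.2 ht) (t • x)
  rw [inv_smul_smul₀ ht.ne'] at h
  calc t * polarNorm H x ≤ t * (t⁻¹ * polarNorm H (t • x)) := by gcongr
    _ = polarNorm H (t • x) := by field_simp

lemma exists_mul_norm_le_polarNorm (hN : 2 ≤ N) (hH : IsFinslerNorm H) :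
    ∃ c : ℝ, 0 < c ∧ ∀ x : Euc N, c * ‖x‖ ≤ polarNorm H x := by
  obtain ⟨a, b, ha, hb, hab⟩ := hH.bounds
  have hb0 : 0 < b := ha.trans_le hb
  refine ⟨b⁻¹, inv_pos.2 hb0, fun x => ?_⟩
  rcases eq_or_ne x 0 with rfl | hx
  · have : Nonempty (Fin N) := ⟨⟨0, by omega⟩⟩
    obtain ⟨ξ, hξ⟩ := exists_ne (0 : Euc N)
    simpa using inner_div_le_polarNorm hH hξ 0
  · refine le_trans ?_ (inner_div_le_polarNorm hH hx x)
    have hn : 0 < ‖x‖ := norm_pos_iff.2 hx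
    have hHx : 0 < H x := (mul_pos ha hn).trans_le (hab x).1
    rw [le_div_iff₀ hHx, real_inner_self_eq_norm_sq]
    calc b⁻¹ * ‖x‖ * H x ≤ b⁻¹ * ‖x‖ * (b * ‖x‖) := by gcongr; exact (hab x).2
      _ = ‖x‖ ^ 2 := by field_simp

end Polar

/-! ### The scaling identity -/

section Scaling

variable {N : ℕ} {g u : Euc N → ℝ} {c : ℝ} {K : ℝ≥0}

lemma integrable_div_of_hasCompactSupport (hN : 2 ≤ N) (hg : Continuous g) (hc : 0 < c)
    (hcg : ∀ x, c * ‖x‖ ≤ g x) (hu : Continuous u) (hcs : HasCompactSupport u) :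
    Integrable (fun x => u x / g x) := by
  have hloc : LocallyIntegrable (fun x => (g x)⁻¹) (volume : Measure (Euc N)) := by
    refine locallyIntegrable_of_norm_le_rpow (C := c⁻¹) (α := 1) ?_ ?_ ?_ ?_
    · simp; omega
    · simp; omega
    · have : Nonempty (Fin N) := ⟨⟨0, by omega⟩⟩
      filter_upwards [(measure_eq_zero_iff_ae_notMem).1 (measure_singleton (0 : Euc N))] with x hx
      have hn : 0 < ‖x‖ := norm_pos_iff.2 hx
      have hpos : 0 < c * ‖x‖ := mul_pos hc hn
      rw [Real.rpow_neg_one, ← mul_inv, norm_inv, Real.norm_of_nonneg (hpos.le.trans (hcg x))]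
      exact inv_anti₀ hpos (hcg x)
    · exact hg.measurable.inv.aestronglyMeasurable
  simpa only [smul_eq_mul, div_eq_mul_inv] using
    hloc.integrable_smul_left_of_hasCompactSupport hu hcs

lemma integral_comp_smul_div (hsm : ∀ t : ℝ, 0 < t → ∀ x, g (t • x) = t * g x) {t : ℝ}
    (ht : 0 < t) : ∫ x, u (t • x) / g x = (t * (t ^ N)⁻¹) * ∫ x, u x / g x := by
  have h := Measure.integral_comp_smul (volume : Measure (Euc N)) (fun x => u x / g x) t
  rw [finrank_euclideanSpace_fin, abs_of_pos (by positivity), smul_eq_mul] at h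
  rw [mul_assoc, ← h, ← integral_const_mul]
  refine integral_congr_ae (Eventually.of_forall fun x => ?_)
  simp only [hsm t ht]
  field_simp

lemma hasDerivAt_comp_smul {x : Euc N} (hd : DifferentiableAt ℝ u x) :
    HasDerivAt (fun t : ℝ => u (t • x)) (fderiv ℝ u x x) 1 := by
  have h1 : HasDerivAt (fun t : ℝ => t • x) x 1 := by
    simpa using (hasDerivAt_id (1 : ℝ)).smul_const x
  have h2 : HasFDerivAt u (fderiv ℝ u x) ((1 : ℝ) • x) := by
    simpa using hd.hasFDerivAt
  exact h2.comp_hasDerivAt (1 : ℝ) h1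

/-- Euler-type identity, from differentiating `t ↦ ∫ u (t x) / g x` at `t = 1`. -/
lemma integral_fderiv_div_eq (hN : 2 ≤ N) (hg : Continuous g) (hc : 0 < c)
    (hcg : ∀ x, c * ‖x‖ ≤ g x) (hsm : ∀ t : ℝ, 0 < t → ∀ x, g (t • x) = t * g x)
    (hu : LipschitzWith K u) (hcs : HasCompactSupport u) :
    ∫ x, fderiv ℝ u x x / g x = -(((N : ℝ) - 1) * ∫ x, u x / g x) := by
  obtain ⟨R, hR⟩ := hcs.isCompact.isBounded.subset_closedBall (0 : Euc N)
  have hzero : ∀ x : Euc N, R < ‖x‖ → u x = 0 := fun x hx => by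
    by_contra h
    have := hR (subset_tsupport u h)
    rw [mem_closedBall_zero_iff] at this
    linarith
  have key := hasDerivAt_integral_of_dominated_loc_of_lip (μ := (volume : Measure (Euc N)))
    (F := fun (t : ℝ) (x : Euc N) => u (t • x) / g x) (x₀ := 1) (s := Ioo (1 / 2) (3 / 2))
    (F' := fun x => fderiv ℝ u x x / g x)
    (bound := (Metric.closedBall (0 : Euc N) (2 * R)).indicator fun _ => (K : ℝ) * c⁻¹)
    (Ioo_mem_nhds (by norm_num) (by norm_num))
    (Eventually.of_forall fun t =>
      ((hu.continuous.comp (continuous_const_smul t)).measurable.div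
        hg.measurable).aestronglyMeasurable)
    (by simpa using integrable_div_of_hasCompactSupport hN hg hc hcg hu.continuous hcs)
    (by
      have h1 : Measurable fun x : Euc N => fderiv ℝ u x x :=
        isBoundedBilinearMap_apply.continuous.measurable.comp
          ((measurable_fderiv ℝ u).prodMk measurable_id)
      exact (h1.div hg.measurable).aestronglyMeasurable)
    (Eventually.of_forall fun x => by
      rw [lipschitzOnWith_iff_dist_le_mul]
      intro t ht s hs
      by_cases hx : x ∈ Metric.closedBall (0 : Euc N) (2 * R)
      · rw [indicator_of_mem hx, Real.coe_nnabs, abs_of_nonneg (by positivity),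
          Real.dist_eq, ← sub_div, abs_div]
        rcases eq_or_ne x 0 with rfl | hx0
        · simp only [smul_zero, sub_self, abs_zero, zero_div]
          positivity
        have hn : 0 < ‖x‖ := norm_pos_iff.2 hx0
        have hgx : 0 < g x := (mul_pos hc hn).trans_le (hcg x)
        rw [abs_of_pos hgx, div_le_iff₀ hgx]
        have h1 := hu.dist_le_mul (t • x) (s • x)
        rw [Real.dist_eq, dist_eq_norm, ← sub_smul, norm_smul, Real.norm_eq_abs] at h1
        rw [Real.dist_eq]
        calc |u (t • x) - u (s • x)| ≤ K * (|t - s| * ‖x‖) := h1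
          _ = K * c⁻¹ * |t - s| * (c * ‖x‖) := by field_simp
          _ ≤ K * c⁻¹ * |t - s| * g x := by gcongr; exact hcg x
      -- For `r > 1/2` and `‖x‖ > 2R`, the point `r x` lies outside the support.
      · have hout : ∀ r ∈ Ioo (1 / 2 : ℝ) (3 / 2), u (r • x) = 0 := fun r hr => by
          apply hzero
          rw [mem_closedBall_zero_iff, not_le] at hx
          have hr1 := hr.1
          rw [norm_smul, Real.norm_eq_abs, abs_of_pos (by linarith)]
          rcases (norm_nonneg x).eq_or_lt with h | h
          · rw [← h] at hx ⊢
            linarith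
          · nlinarith
        simp only [hout t ht, hout s hs, zero_div, dist_self]
        positivity)
    ((integrable_indicator_iff Metric.isClosed_closedBall.measurableSet).2
      (integrableOn_const (isCompact_closedBall _ _).measure_lt_top.ne))
    (by
      filter_upwards [hu.ae_differentiableAt (μ := (volume : Measure (Euc N)))] with x hx
      exact (hasDerivAt_comp_smul hx).div_const _)
  have hpow : HasDerivAt (fun t : ℝ => (t * (t ^ N)⁻¹) * ∫ x, u x / g x)
      ((1 - (N : ℝ)) * ∫ x, u x / g x) 1 := by
    have h1 := ((hasDerivAt_id (1 : ℝ)).mul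
      ((hasDerivAt_pow N (1 : ℝ)).inv (by simp))).mul_const (∫ x, u x / g x)
    refine h1.congr_deriv ?_
    congr 1
    simp
    ring
  have heq : (fun t : ℝ => ∫ x, u (t • x) / g x)
      =ᶠ[𝓝 1] fun t : ℝ => (t * (t ^ N)⁻¹) * ∫ x, u x / g x := by
    filter_upwards [Ioi_mem_nhds (zero_lt_one (α := ℝ))] with t ht
    exact integral_comp_smul_div hsm ht
  rw [key.2.unique (hpow.congr_of_eventuallyEq heq)]
  ring

end Scaling

/-- Along rays `u` is nonincreasing, so its radial derivative is nonpositive. -/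
lemma fderiv_apply_self_nonpos {N : ℕ} {g u : Euc N → ℝ} {U : ℝ → ℝ} (hg : ∀ x, 0 ≤ g x)
    (hsm : ∀ t : ℝ, 0 < t → ∀ x, g (t • x) = t * g x) (hrad : ∀ x, u x = U (g x))
    (hU : AntitoneOn U (Ici 0)) (x : Euc N) : fderiv ℝ u x x ≤ 0 := by
  by_cases hd : DifferentiableAt ℝ u x
  · have hanti : AntitoneOn (fun t : ℝ => u (t • x)) (Ioi 0) := by
      intro s hs t ht hst
      simp only [hrad, hsm s hs, hsm t ht]
      exact hU (mul_nonneg (le_of_lt hs) (hg x)) (mul_nonneg (le_of_lt ht) (hg x))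
        (mul_le_mul_of_nonneg_right hst (hg x))
    have h := hanti.derivWithin_nonpos (x := 1)
    rwa [derivWithin_of_isOpen isOpen_Ioi (mem_Ioi.2 one_pos),
      (hasDerivAt_comp_smul hd).deriv] at h
  · simp [fderiv_zero_of_not_differentiableAt hd]

/-- For p = 1 the best Hardy constant N - 1 is attained by every nonnegative
H⁰-radially decreasing Lipschitz function with compact support in Ω. -/
theorem finsler_hardy_L1_attained
    (N : ℕ) (hN : 2 ≤ N) (H : Euc N → ℝ) (hH : IsFinslerNorm H)
    (Ω : Set (Euc N)) (hΩopen : IsOpen Ω) (hΩconn : IsConnected Ω) (h0 : 0 ∈ Ω)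
    (u : Euc N → ℝ) (K : ℝ≥0) (hLip : LipschitzWith K u)
    (hcs : HasCompactSupport u) (hsupp : tsupport u ⊆ Ω)
    (hnn : ∀ x, 0 ≤ u x)
    (U : ℝ → ℝ) (hrad : ∀ x, u x = U (polarNorm H x))
    (hUanti : AntitoneOn U (Ici 0)) (hUnn : ∀ r ∈ Ici (0 : ℝ), 0 ≤ U r) :
    ((N : ℝ) - 1) * ∫ x in Ω, u x / polarNorm H x
      = ∫ x in Ω, |⟪(polarNorm H x)⁻¹ • x, gradient u x⟫| ∧
    (u ≠ 0 →
      (∫ x in Ω, |⟪(polarNorm H x)⁻¹ • x, gradient u x⟫|) /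
          (∫ x in Ω, |u x| / polarNorm H x) = (N : ℝ) - 1) := by
  obtain ⟨c, hc, hcg⟩ := exists_mul_norm_le_polarNorm hN hH
  have hg := continuous_polarNorm hN hH
  have hsm : ∀ t : ℝ, 0 < t → ∀ x, polarNorm H (t • x) = t * polarNorm H x :=
    fun t ht x => polarNorm_smul hN hH ht x
  have hg0 : ∀ x, 0 ≤ polarNorm H x := fun x => (by positivity : 0 ≤ c * ‖x‖).trans (hcg x)
  have hint := integrable_div_of_hasCompactSupport hN hg hc hcg hLip.continuous hcs
  have hpt : ∀ x, |⟪(polarNorm H x)⁻¹ • x, gradient u x⟫|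
      = -(fderiv ℝ u x x / polarNorm H x) := fun x => by
    have hin : ⟪x, gradient u x⟫ = fderiv ℝ u x x := by
      rw [real_inner_comm, ← toDual_gradient, InnerProductSpace.toDual_apply_apply]
    rw [real_inner_smul_left, hin, inv_mul_eq_div, abs_of_nonpos]
    exact div_nonpos_of_nonpos_of_nonneg
      (fderiv_apply_self_nonpos hg0 hsm hrad hUanti x) (hg0 x)
  -- Both integrands vanish off the support of `u`, so `Ω` may be replaced by the whole space.
  have hL : ∫ x in Ω, u x / polarNorm H x = ∫ x, u x / polarNorm H x :=
    setIntegral_eq_integral_of_forall_compl_eq_zero fun x hx => by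
      rw [image_eq_zero_of_notMem_tsupport fun h => hx (hsupp h), zero_div]
  have hR : ∫ x in Ω, |⟪(polarNorm H x)⁻¹ • x, gradient u x⟫|
      = ∫ x, -(fderiv ℝ u x x / polarNorm H x) := by
    simp only [hpt]
    refine setIntegral_eq_integral_of_forall_compl_eq_zero fun x hx => ?_
    have : fderiv ℝ u x = 0 := by
      by_contra h
      exact hx (hsupp (support_fderiv_subset ℝ h))
    simp [this]
  have hmain : ((N : ℝ) - 1) * ∫ x in Ω, u x / polarNorm H x
      = ∫ x in Ω, |⟪(polarNorm H x)⁻¹ • x, gradient u x⟫| := by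
    rw [hL, hR, integral_neg, integral_fderiv_div_eq hN hg hc hcg hsm hLip hcs, neg_neg]
  refine ⟨hmain, fun hu => ?_⟩
  have hpos : 0 < ∫ x, u x / polarNorm H x := by
    rw [integral_pos_iff_support_of_nonneg (fun x => div_nonneg (hnn x) (hg0 x)) hint]
    have : Nonempty (Fin N) := ⟨⟨0, by omega⟩⟩
    have hsub : Function.support u \ {0} ⊆ Function.support fun x => u x / polarNorm H x := by
      rintro x ⟨hx, hx0⟩
      have hn : 0 < ‖x‖ := norm_pos_iff.2 hx0
      exact div_ne_zero hx ((mul_pos hc hn).trans_le (hcg x)).ne'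
    refine lt_of_lt_of_le ?_ (measure_mono hsub)
    rw [measure_sdiff_null (measure_singleton _)]
    exact (hLip.continuous.isOpen_support).measure_pos _ (Function.support_nonempty_iff.2 hu)
  simp only [abs_of_nonneg (hnn _)]
  rw [← hmain, hL, mul_div_assoc, div_self hpos.ne', mul_one]
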